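/- Let Δ ⊆ ℝ² be a 2-dimensional reflexive polytope. Then v(Δ) + v(Δ*) = 12. -/

import Mathlib

open MeasureTheory Filter Pointwise

noncomputable section

/-- The canonical embedding of a lattice point of `ℤ^d` into `ℝ^d`. -/
def coeLat {d : ℕ} (n : Fin d → ℤ) : Fin d → ℝ := fun i => (n i : ℝ)

/-- The set of lattice points lying in a subset `S ⊆ ℝ^d`. -/
def latticePoints {d : ℕ} (S : Set (Fin d → ℝ)) : Set (Fin d → ℤ) :=
  {n | coeLat n ∈ S}

/-- A lattice polytope: the convex hull of finitely many points of `ℤ^d`. -/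
def IsLatticePolytope {d : ℕ} (P : Set (Fin d → ℝ)) : Prop :=
  ∃ V : Finset (Fin d → ℤ), P = convexHull ℝ (coeLat '' (V : Set (Fin d → ℤ)))

/-- The dual (polar) body `P* = {y | ⟨y,x⟩ ≥ -1 ∀ x ∈ P}`. -/
def polarDual {d : ℕ} (P : Set (Fin d → ℝ)) : Set (Fin d → ℝ) :=
  {y | ∀ x ∈ P, -1 ≤ ∑ i, y i * x i}

/-- Dimension of a subset of `ℝ^d`: the dimension of its affine span. -/
def dimSet {d : ℕ} (S : Set (Fin d → ℝ)) : ℕ :=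
  Module.finrank ℝ (affineSpan ℝ S).direction

/-- A reflexive polytope: a lattice polytope containing the origin in its interior
whose dual is again a lattice polytope. -/
def IsReflexive {d : ℕ} (P : Set (Fin d → ℝ)) : Prop :=
  IsLatticePolytope P ∧ (0 : Fin d → ℝ) ∈ interior P ∧ IsLatticePolytope (polarDual P)

/-- A (nonempty, exposed) face of dimension `k` of a polytope `P`. -/
def IsFaceOfDim {d : ℕ} (P : Set (Fin d → ℝ)) (k : ℕ) (θ : Set (Fin d → ℝ)) : Prop :=
  IsExposed ℝ P θ ∧ θ.Nonempty ∧ dimSet θ = k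

/-- The dual face `θ* = {y ∈ P* | ⟨y,x⟩ = -1 ∀ x ∈ θ}` of a face `θ` of `P`. -/
def dualFace {d : ℕ} (P θ : Set (Fin d → ℝ)) : Set (Fin d → ℝ) :=
  {y ∈ polarDual P | ∀ x ∈ θ, ∑ i, y i * x i = -1}

/-- The normalized volume of a `k`-dimensional lattice polytope `θ ⊆ ℝ^d`:
`lim_{m → ∞} k! ⬝ |mθ ∩ ℤ^d| / m^k`. -/
def normVol {d : ℕ} (k : ℕ) (θ : Set (Fin d → ℝ)) : ℝ :=
  limUnder atTop
    (fun m : ℕ => (Nat.factorial k : ℝ) * (latticePoints ((m : ℝ) • θ)).ncard / (m : ℝ) ^ k)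

/-- Normalized volume of a 2-dimensional compact convex set in `ℝ²`:
twice its Lebesgue area. -/
def v2 (P : Set (Fin 2 → ℝ)) : ℝ := 2 * (volume P).toReal


structure RP (B C : Finset (ℤ × ℤ)) : Prop where
  hB : ∀ x y : ℤ, (x, y) ∈ B ↔ ∀ p q : ℤ, (p, q) ∈ C → -1 ≤ p * x + q * y
  hC : ∀ p q : ℤ, (p, q) ∈ C ↔ ∀ x y : ℤ, (x, y) ∈ B → -1 ≤ p * x + q * y

theorem RP.symm {B C : Finset (ℤ × ℤ)} (h : RP B C) : RP C B where
  hB := fun p q => by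
    rw [h.hC]; refine forall_congr' fun x => forall_congr' fun y => ?_
    rw [mul_comm x, mul_comm y]
  hC := fun p q => by
    rw [h.hB]; refine forall_congr' fun x => forall_congr' fun y => ?_
    rw [mul_comm p, mul_comm q]

theorem RP.le {B C : Finset (ℤ × ℤ)} (h : RP B C) {x y p q : ℤ} (hv : (x, y) ∈ B)
    (hu : (p, q) ∈ C) : -1 ≤ p * x + q * y := (h.hB x y).1 hv p q hu

theorem RP.zero {B C : Finset (ℤ × ℤ)} (h : RP B C) : ((0 : ℤ), (0 : ℤ)) ∈ B := by
  rw [h.hB]; intros; simp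

theorem RP.ex {B C : Finset (ℤ × ℤ)} (h : RP B C) {x y : ℤ} (hne : (x, y) ≠ (0, 0)) :
    ∃ p q : ℤ, (p, q) ∈ C ∧ p * x + q * y ≤ -1 := by
  by_contra hcon
  push Not at hcon
  have key : ∀ n : ℕ, ((n : ℤ) * x, (n : ℤ) * y) ∈ (B : Set (ℤ × ℤ)) := by
    intro n
    simp only [Finset.mem_coe]
    rw [h.hB]
    intro p q hpq
    have := hcon p q hpq
    have h2 : 0 ≤ p * x + q * y := by linarith
    have h3 : 0 ≤ (n : ℤ) * (p * x + q * y) := by positivity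
    linarith
  refine Set.infinite_of_injective_forall_mem (f := fun n : ℕ => ((n : ℤ) * x, (n : ℤ) * y))
    ?_ key B.finite_toSet
  intro m n hmn
  simp only [Prod.mk.injEq] at hmn
  by_cases hx : x = 0
  · have hy : y ≠ 0 := by rintro rfl; exact hne (by rw [hx])
    exact_mod_cast mul_right_cancel₀ hy hmn.2
  · exact_mod_cast mul_right_cancel₀ hx hmn.1

theorem RP.ex1 {B C : Finset (ℤ × ℤ)} (h : RP B C) {x y : ℤ} (hv : (x, y) ∈ B)
    (hne : (x, y) ≠ (0, 0)) : ∃ p q : ℤ, (p, q) ∈ C ∧ p * x + q * y = -1 := by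
  obtain ⟨p, q, h1, h2⟩ := h.ex hne
  exact ⟨p, q, h1, le_antisymm h2 (h.le hv h1)⟩

/-- the linear bijection of the lattice given by a unimodular matrix -/
def uniEquiv (a b c d e : ℤ) (he : a * d - b * c = e) (hee : e * e = 1) : ℤ × ℤ ≃ ℤ × ℤ where
  toFun v := (a * v.1 + b * v.2, c * v.1 + d * v.2)
  invFun v := (e * (d * v.1 - b * v.2), e * (a * v.2 - c * v.1))
  left_inv v := by
    ext
    · simp only
      linear_combination (e * v.1) * he + v.1 * hee
    · simp only
      linear_combination (e * v.2) * he + v.2 * hee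
  right_inv v := by
    ext
    · simp only
      linear_combination (e * v.1) * he + v.1 * hee
    · simp only
      linear_combination (e * v.2) * he + v.2 * hee

theorem RP.trans {B C : Finset (ℤ × ℤ)} (h : RP B C) (a b c d e : ℤ)
    (he : a * d - b * c = e) (hee : e * e = 1) :
    ∃ B' C' : Finset (ℤ × ℤ), RP B' C' ∧ B'.card = B.card ∧ C'.card = C.card ∧
      (∀ x y, (x, y) ∈ B' ↔ (a * x + b * y, c * x + d * y) ∈ B) ∧
      (∀ p q, (p, q) ∈ C' ↔ (e * (d * p - c * q), e * (a * q - b * p)) ∈ C) := by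
  let E := uniEquiv a b c d e he hee
  have hee' : (e * d) * (e * a) - (-(e * c)) * (-(e * b)) = e := by
    linear_combination (e * e) * he + e * hee
  let F := uniEquiv (e * d) (-(e * c)) (-(e * b)) (e * a) e hee' hee
  have mB : ∀ x y, (x, y) ∈ B.map E.symm.toEmbedding ↔ (a * x + b * y, c * x + d * y) ∈ B := by
    intro x y
    rw [Finset.mem_map_equiv]; rfl
  have mC : ∀ p q, (p, q) ∈ C.map F.symm.toEmbedding ↔
      (e * (d * p - c * q), e * (a * q - b * p)) ∈ C := by
    intro p q
    rw [Finset.mem_map_equiv]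
    have : F.symm.symm (p, q) = (e * (d * p - c * q), e * (a * q - b * p)) := by
      simp only [Equiv.symm_symm, F, uniEquiv, Equiv.coe_fn_mk]
      ext <;> simp only <;> ring
    rw [this]
  have pair : ∀ x y p q : ℤ, (e * (d * p - c * q)) * (a * x + b * y) +
      (e * (a * q - b * p)) * (c * x + d * y) = p * x + q * y := by
    intro x y p q
    linear_combination (e * (p * x + q * y)) * he + (p * x + q * y) * hee
  refine ⟨_, _, ⟨?_, ?_⟩, Finset.card_map _, Finset.card_map _, mB, mC⟩
  · intro x y
    rw [mB, h.hB]
    constructor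
    · intro H p q hpq
      rw [mC] at hpq
      have := H _ _ hpq
      rwa [pair] at this
    · intro H p q hpq
      have h1 := H (a * p + c * q) (b * p + d * q) (by
        rw [mC]
        convert hpq using 2
        · linear_combination (e * p) * he + p * hee
        · linear_combination (e * q) * he + q * hee)
      linarith
  · intro p q
    rw [mC, h.hC]
    constructor
    · intro H x y hxy
      rw [mB] at hxy
      have := H _ _ hxy
      rwa [pair] at this
    · intro H x y hxy
      have h1 := H (e * (d * x - b * y)) (e * (a * y - c * x)) (by
        rw [mB]
        convert hxy using 2
        · linear_combination (e * x) * he + x * hee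
        · linear_combination (e * y) * he + y * hee)
      linarith

/-- normal form: a primitive point becomes `(1,0)` and a dual point becomes `(-1,0)`. -/
theorem RP.norm {B C : Finset (ℤ × ℤ)} (h : RP B C) {a b c d : ℤ} (hm : (a, b) ∈ B)
    (hu : (c, d) ∈ C) (hmu : c * a + d * b = -1) :
    ∃ B' C' : Finset (ℤ × ℤ), RP B' C' ∧ B'.card = B.card ∧ C'.card = C.card ∧
      (∀ x y, (x, y) ∈ B' ↔ (a * x + d * y, b * x - c * y) ∈ B) ∧
      (∀ p q, (p, q) ∈ C' ↔ (-c * p - b * q, -d * p + a * q) ∈ C) ∧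
      (1, 0) ∈ B' ∧ (-1, 0) ∈ C' := by
  obtain ⟨B', C', h1, h2, h3, h4, h5⟩ := h.trans a d b (-c) 1 (by linarith) (by norm_num)
  refine ⟨B', C', h1, h2, h3, ?_, ?_, ?_, ?_⟩
  · intro x y; rw [h4]; ring_nf
  · intro x y; rw [h5]; ring_nf
  · rw [h4]; simpa using hm
  · rw [h5]; simpa using hu

theorem RP.succ {B C : Finset (ℤ × ℤ)} (h : RP B C) {a b : ℤ} (hv : (a, b) ∈ B)
    (hne : (a, b) ≠ (0, 0)) :
    ∃ x y c d : ℤ, (x, y) ∈ B ∧ a * y - b * x = 1 ∧ (c, d) ∈ C ∧ c * a + d * b = -1 ∧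
      c * x + d * y = -1 := by
  obtain ⟨p0, q0, hu0, huv0⟩ := h.ex1 hv hne
  obtain ⟨⟨c, d⟩, hcd, hmin⟩ := Finset.exists_min_image
    (C.filter fun u => u.1 * a + u.2 * b = -1) (fun u => a * u.2 - b * u.1)
    ⟨(p0, q0), by simp [hu0, huv0]⟩
  simp only [Finset.mem_filter] at hcd hmin
  obtain ⟨hu, huv⟩ := hcd
  obtain ⟨B', C', h', -, -, mB, mC, e1, f1⟩ := h.norm hv hu huv
  have hpos : 0 < a * a + b * b := by
    rcases eq_or_ne a 0 with rfl | ha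
    · have : b ≠ 0 := by rintro rfl; exact hne rfl
      have := mul_self_pos.2 this
      linarith
    · have := mul_self_pos.2 ha
      have := mul_self_nonneg b
      linarith
  have hq : ∀ q, (-1, q) ∈ C' → 0 ≤ q := by
    intro q hq
    rw [mC] at hq
    have := hmin _ ⟨hq, by linear_combination huv⟩
    simp only at this
    have h2 : 0 ≤ q * (a * a + b * b) := by linarith
    by_contra hneg
    push Not at hneg
    nlinarith
  -- (1,1) ∈ B'
  have h11 : ((1 : ℤ), (1 : ℤ)) ∈ B' := by
    have hnot : ((-1 : ℤ), (-1 : ℤ)) ∉ C' := fun hh => by have := hq _ hh; omega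
    rw [h'.hC] at hnot
    push Not at hnot
    obtain ⟨x, y, hxy, hlt⟩ := hnot
    have hx1 : x ≤ 1 := by have := h'.le hxy f1; linarith
    have hy : 1 ≤ y := by linarith
    have hx : x = 1 := by
      by_contra hx
      have hx0 : x ≤ 0 := by omega
      have hge : ∀ p q, (p, q) ∈ C' → 0 ≤ q := by
        intro p q hpq
        have i1 := h'.le hxy hpq
        have i2 := h'.le e1 hpq
        by_contra hh
        have hq2 : q ≤ -1 := by omega
        have hp : 0 ≤ p + 1 := by linarith
        have k1 := mul_nonneg (sub_nonneg.2 hx0) hp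
        have k2 := mul_nonneg (sub_nonneg.2 hy) (sub_nonneg.2 hq2)
        linarith
      obtain ⟨p, q, hpq, hq1⟩ := h'.ex (x := 0) (y := 1) (by simp)
      have := hge p q hpq
      linarith
    subst hx
    rw [h'.hB]
    intro r s hrs
    have j1 := h'.le hxy hrs
    have j2 := h'.le e1 hrs
    by_contra hh
    nlinarith
  rw [mB] at h11
  exact ⟨_, _, c, d, h11, by linear_combination -huv, hu, huv, by linear_combination huv⟩

theorem RP.succ_unique {B C : Finset (ℤ × ℤ)} (h : RP B C) {a b x y c d x' y' c' d' : ℤ}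
    (hw : (x, y) ∈ B) (hdet : a * y - b * x = 1)
    (hu : (c, d) ∈ C) (huv : c * a + d * b = -1) (huw : c * x + d * y = -1)
    (hw' : (x', y') ∈ B) (hdet' : a * y' - b * x' = 1)
    (hu' : (c', d') ∈ C) (huv' : c' * a + d' * b = -1) (huw' : c' * x' + d' * y' = -1) :
    x' = x ∧ y' = y := by
  obtain ⟨k, hk⟩ : ∃ k, k = -(c * (x' - x) + d * (y' - y)) := ⟨_, rfl⟩
  have h1 : x' - x = k * a := by
    rw [hk]; linear_combination (x' - x) * huv + d * (hdet' - hdet)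
  have h2 : y' - y = k * b := by
    rw [hk]; linear_combination (y' - y) * huv - c * (hdet' - hdet)
  have i1 := h.le hw' hu
  have i2 := h.le hw hu'
  have j1 : k ≤ 0 := by
    have e : c * x' + d * y' = -1 - k := by
      linear_combination huw + c * h1 + d * h2 + k * huv
    linarith
  have j2 : 0 ≤ k := by
    have e : c' * x + d' * y = -1 + k := by
      linear_combination huw' - c' * h1 - d' * h2 - k * huv'
    linarith
  have : k = 0 := le_antisymm j1 j2
  subst this
  constructor <;> linarith

theorem RP.half {B C : Finset (ℤ × ℤ)} (h : RP B C) (e1 : (1, 0) ∈ B) (e2 : (-1, 0) ∈ B) :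
    ∃ α β ε : ℤ, (α, 1) ∈ B ∧ (β, 1) ∈ B ∧ (-1, β - 1) ∈ C ∧ (1, -1 - α) ∈ C ∧
      ((B.filter fun v => 0 < v.2).card : ℤ) + ε = β - α + 2 ∧
      (((0, -1) ∈ C ∧ ε = 1) ∨ ((0, -1) ∉ C ∧ ε = 0)) := by
  obtain ⟨β, y, c, d, hw, hdet, hu, huv, huw⟩ := h.succ e1 (by simp)
  obtain rfl : y = 1 := by linarith
  obtain rfl : c = -1 := by linarith
  obtain rfl : d = β - 1 := by linarith
  obtain ⟨B', C', h', -, -, mB, mC⟩ := h.trans (-1) 0 0 1 (-1) (by norm_num) (by norm_num)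
  obtain ⟨α', y, c, d, hw', hdet', hu', huv', huw'⟩ :=
    h'.succ (a := 1) (b := 0) (by rw [mB]; simpa using e2) (by simp)
  obtain rfl : y = 1 := by linarith
  obtain rfl : c = -1 := by linarith
  obtain rfl : d = α' - 1 := by linarith
  obtain ⟨α, rfl⟩ : ∃ α, α' = -α := ⟨-α', by ring⟩
  rw [mB] at hw'
  rw [mC] at hu'
  have hα : (α, 1) ∈ B := by convert hw' using 2 <;> ring
  have hα' : (1, -1 - α) ∈ C := by convert hu' using 2 <;> ring
  have hαβ : α ≤ β := by have := h.le hw hα'; linarith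
  have hrow : ∀ x, (x, 1) ∈ B ↔ α ≤ x ∧ x ≤ β := by
    intro x
    constructor
    · intro hx
      have i1 := h.le hx hα'
      have i2 := h.le hx hu
      constructor <;> linarith
    · rintro ⟨k1, k2⟩
      rw [h.hB]
      intro p q hpq
      have i1 := h.le hα hpq
      have i2 := h.le hw hpq
      rcases le_total 0 p with hp | hp
      · have := mul_nonneg hp (sub_nonneg.2 k1); linarith
      · have := mul_nonneg (sub_nonneg.2 hp) (sub_nonneg.2 k2); linarith
  have hC1 : ∀ p q, (p, q) ∈ C → -1 ≤ p ∧ p ≤ 1 := by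
    intro p q hpq
    have i1 := h.le e1 hpq
    have i2 := h.le e2 hpq
    constructor <;> linarith
  by_cases hc : (0, -1) ∈ C
  · refine ⟨α, β, 1, hα, hw, hu, hα', ?_, Or.inl ⟨hc, rfl⟩⟩
    have : (B.filter fun v => 0 < v.2) = (Finset.Icc α β).map ⟨fun x => (x, 1), fun x y hxy => by
        simpa using hxy⟩ := by
      ext ⟨x, y⟩
      simp only [Finset.mem_filter, Finset.mem_map, Finset.mem_Icc]
      constructor
      · rintro ⟨i1, i2⟩
        have i3 := h.le i1 hc
        obtain rfl : y = 1 := by linarith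
        exact ⟨x, (hrow x).1 i1, rfl⟩
      · rintro ⟨z, i1, hz⟩
        obtain ⟨rfl, rfl⟩ := Prod.mk.inj hz
        exact ⟨(hrow _).2 i1, by norm_num⟩
    rw [this, Finset.card_map, Int.card_Icc]
    omega
  · refine ⟨α, β, 0, hα, hw, hu, hα', ?_, Or.inr ⟨hc, rfl⟩⟩
    have hc' := hc
    rw [h.hC] at hc'
    push Not at hc'
    obtain ⟨γ, y, hγ, hy⟩ := hc'
    have hβ : β ≤ α + 1 := by
      by_contra hcon
      obtain ⟨p, q, hpq, hv⟩ := h.ex1 ((hrow (α + 1)).2 ⟨by linarith, by linarith⟩) (by simp)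
      have i1 := h.le hα hpq
      have i2 := h.le hw hpq
      obtain ⟨j1, j2⟩ := hC1 _ _ hpq
      have : p = -1 ∨ p = 0 ∨ p = 1 := by omega
      rcases this with rfl | rfl | rfl
      · linarith
      · obtain rfl : q = -1 := by linarith
        exact hc hpq
      · linarith
    have gen : ∀ x y, (x, y) ∈ B → 2 ≤ y → y = 2 ∧ x = 2 * α + 1 ∧ β = α + 1 := by
      intro x y hxy hy
      have i1 := h.le hxy hα'
      have i2 := h.le hxy hu
      have : β = α ∨ β = α + 1 := by omega
      rcases this with rfl | rfl
      · exfalso; linarith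
      · have : y = 2 := by linarith
        subst this
        refine ⟨rfl, by linarith, rfl⟩
    obtain ⟨rfl, rfl, rfl⟩ := gen _ _ hγ (by linarith)
    have : (B.filter fun v => 0 < v.2) = {(α, 1), (α + 1, 1), (2 * α + 1, 2)} := by
      ext ⟨x, y⟩
      simp only [Finset.mem_filter, Finset.mem_insert, Finset.mem_singleton, Prod.mk.injEq]
      constructor
      · rintro ⟨i1, i2⟩
        rcases (by omega : y = 1 ∨ 2 ≤ y) with rfl | hy
        · have := (hrow x).1 i1
          omega
        · have := gen _ _ i1 hy
          omega
      · rintro (⟨rfl, rfl⟩ | ⟨rfl, rfl⟩ | ⟨rfl, rfl⟩)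
        · exact ⟨hα, by norm_num⟩
        · exact ⟨hw, by norm_num⟩
        · exact ⟨hγ, by norm_num⟩
    rw [this, Finset.card_insert_of_notMem (by simp), Finset.card_insert_of_notMem (by simp),
      Finset.card_singleton]
    push_cast
    ring

theorem RP.card_of_opp {B C : Finset (ℤ × ℤ)} (h : RP B C) (e1 : (1, 0) ∈ B)
    (e2 : (-1, 0) ∈ B) : B.card + C.card = 14 := by
  obtain ⟨α, β, ε, hα, hβ, huβ, huα, hcard, hε⟩ := h.half e1 e2
  obtain ⟨B', C', h', -, -, mB, mC⟩ := h.trans 1 0 0 (-1) (-1) (by norm_num) (by norm_num)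
  have mB' : ∀ x y, (x, y) ∈ B' ↔ (x, -y) ∈ B := by intro x y; rw [mB]; ring_nf
  have mC' : ∀ x y, (x, y) ∈ C' ↔ (x, -y) ∈ C := by intro x y; rw [mC]; ring_nf
  obtain ⟨α', β', ε', hα', hβ', huβ', huα', hcard', hε'⟩ :=
    h'.half (by rw [mB']; simpa using e1) (by rw [mB']; simpa using e2)
  rw [mB'] at hα' hβ'
  rw [mC'] at huα' huβ' hε'
  have hB3 : B.card = (B.filter fun v => 0 < v.2).card + (B'.filter fun v => 0 < v.2).card
      + 3 := by
    have s1 : (B'.filter fun v => 0 < v.2).card = (B.filter fun v => v.2 < 0).card := by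
      refine Finset.card_nbij' (fun v => (v.1, -v.2)) (fun v => (v.1, -v.2)) ?_ ?_ ?_ ?_
      · rintro ⟨x, y⟩ hv
        simp only [Finset.coe_filter, Set.mem_ofPred_eq, mB'] at hv ⊢
        exact ⟨hv.1, by linarith [hv.2]⟩
      · rintro ⟨x, y⟩ hv
        simp only [Finset.coe_filter, Set.mem_ofPred_eq, mB', neg_neg] at hv ⊢
        exact ⟨hv.1, by linarith [hv.2]⟩
      · rintro ⟨x, y⟩ hv; simp
      · rintro ⟨x, y⟩ hv; simp
    have s2 : (B.filter fun v => v.2 = 0) = {(-1, 0), (0, 0), (1, 0)} := by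
      ext ⟨x, y⟩
      simp only [Finset.mem_filter, Finset.mem_insert, Finset.mem_singleton, Prod.mk.injEq]
      constructor
      · rintro ⟨i1, rfl⟩
        have j1 := h.le i1 huβ
        have j2 := h.le i1 huα
        omega
      · rintro (⟨rfl, rfl⟩ | ⟨rfl, rfl⟩ | ⟨rfl, rfl⟩)
        · exact ⟨e2, rfl⟩
        · exact ⟨h.zero, rfl⟩
        · exact ⟨e1, rfl⟩
    have s3 : (B.filter fun v => v.2 = 0).card = 3 := by rw [s2]; rfl
    rw [s1, ← s3]
    have t1 := Finset.card_filter_add_card_filter_not (s := B) (fun v => 0 < v.2)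
    have t2 := Finset.card_filter_add_card_filter_not (s := B.filter fun v => ¬ 0 < v.2)
      (fun v => v.2 < 0)
    rw [Finset.filter_filter, Finset.filter_filter] at t2
    have r1 : (B.filter fun v => ¬ 0 < v.2 ∧ v.2 < 0) = B.filter fun v => v.2 < 0 :=
      Finset.filter_congr fun v _ => by omega
    have r2 : (B.filter fun v => ¬ 0 < v.2 ∧ ¬ v.2 < 0) = B.filter fun v => v.2 = 0 :=
      Finset.filter_congr fun v _ => by omega
    rw [r1, r2] at t2
    omega
  have k1 : -1 - α ≤ 1 + α' := by have := h.le hα' huα; linarith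
  have k2 : β - 1 ≤ 1 - β' := by have := h.le hβ' huβ; linarith
  -- the three columns of `C`
  have c1 : (C.filter fun u => u.1 = 1) = (Finset.Icc (-1 - α) (1 + α')).map
      ⟨fun x => (1, x), fun x y hxy => by simpa using hxy⟩ := by
    ext ⟨p, q⟩
    simp only [Finset.mem_filter, Finset.mem_map, Finset.mem_Icc]
    constructor
    · rintro ⟨i1, rfl⟩
      have j1 := h.le hα i1
      have j2 := h.le hα' i1
      exact ⟨q, ⟨by linarith, by linarith⟩, rfl⟩
    · rintro ⟨z, ⟨i1, i2⟩, hz⟩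
      obtain ⟨rfl, rfl⟩ := Prod.mk.inj hz
      refine ⟨?_, rfl⟩
      rw [h.hC]
      intro x y hxy
      have j1 := h.le hxy huα
      have j2 := h.le hxy huα'
      rcases le_total 0 y with hy | hy
      · have := mul_nonneg hy (sub_nonneg.2 i1); linarith
      · have := mul_nonneg (sub_nonneg.2 hy) (sub_nonneg.2 i2); linarith
  have c2 : (C.filter fun u => u.1 = -1) = (Finset.Icc (β - 1) (1 - β')).map
      ⟨fun x => (-1, x), fun x y hxy => by simpa using hxy⟩ := by
    ext ⟨p, q⟩
    simp only [Finset.mem_filter, Finset.mem_map, Finset.mem_Icc]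
    constructor
    · rintro ⟨i1, rfl⟩
      have j1 := h.le hβ i1
      have j2 := h.le hβ' i1
      exact ⟨q, ⟨by linarith, by linarith⟩, rfl⟩
    · rintro ⟨z, ⟨i1, i2⟩, hz⟩
      obtain ⟨rfl, rfl⟩ := Prod.mk.inj hz
      refine ⟨?_, rfl⟩
      rw [h.hC]
      intro x y hxy
      have j1 := h.le hxy huβ
      have j2 := h.le hxy huβ'
      rcases le_total 0 y with hy | hy
      · have := mul_nonneg hy (sub_nonneg.2 i1); linarith
      · have := mul_nonneg (sub_nonneg.2 hy) (sub_nonneg.2 i2); linarith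
  have c0 : ((C.filter fun u => u.1 = 0).card : ℤ) = 1 + ε + ε' := by
    have c00 : (0, 0) ∈ C := h.symm.zero
    have hsub : ∀ q, (0, q) ∈ C → q = -1 ∨ q = 0 ∨ q = 1 := by
      intro q hq
      have j1 := h.le hα hq
      have j2 := h.le hα' hq
      omega
    have ext0 : ∀ S : Finset (ℤ × ℤ), (∀ p q, (p, q) ∈ S ↔ p = 0 ∧ (q = 0 ∨
        (q = -1 ∧ (0, -1) ∈ C) ∨ (q = 1 ∧ (0, 1) ∈ C))) → (C.filter fun u => u.1 = 0) = S := by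
      intro S hS
      ext ⟨p, q⟩
      rw [hS, Finset.mem_filter]
      constructor
      · rintro ⟨i1, rfl⟩
        refine ⟨rfl, ?_⟩
        rcases hsub _ i1 with rfl | rfl | rfl
        · exact Or.inr (Or.inl ⟨rfl, i1⟩)
        · exact Or.inl rfl
        · exact Or.inr (Or.inr ⟨rfl, i1⟩)
      · rintro ⟨rfl, rfl | ⟨rfl, i⟩ | ⟨rfl, i⟩⟩
        · exact ⟨c00, rfl⟩
        · exact ⟨i, rfl⟩
        · exact ⟨i, rfl⟩
    rw [neg_neg] at hε'
    rcases hε with ⟨m1, rfl⟩ | ⟨m1, rfl⟩ <;> rcases hε' with ⟨m2, rfl⟩ | ⟨m2, rfl⟩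
    · rw [ext0 {(0, 0), (0, -1), (0, 1)} (by intro p q; simp [m1, m2]; omega)]
      rfl
    · rw [ext0 {(0, 0), (0, -1)} (by intro p q; simp [m1, m2]; omega)]
      rfl
    · rw [ext0 {(0, 0), (0, 1)} (by intro p q; simp [m1, m2]; omega)]
      rfl
    · rw [ext0 {(0, 0)} (by intro p q; simp [m1, m2])]
      rfl
  have hC3 : C.card = (C.filter fun u => u.1 = 1).card + (C.filter fun u => u.1 = -1).card
      + (C.filter fun u => u.1 = 0).card := by
    have t1 := Finset.card_filter_add_card_filter_not (s := C) (fun v => v.1 = 1)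
    have t2 := Finset.card_filter_add_card_filter_not (s := C.filter fun v => ¬ v.1 = 1)
      (fun v => v.1 = -1)
    rw [Finset.filter_filter, Finset.filter_filter] at t2
    have r1 : (C.filter fun v => ¬ v.1 = 1 ∧ v.1 = -1) = C.filter fun v => v.1 = -1 :=
      Finset.filter_congr fun v _ => by omega
    have r2 : (C.filter fun v => ¬ v.1 = 1 ∧ ¬ v.1 = -1) = C.filter fun v => v.1 = 0 := by
      refine Finset.filter_congr ?_
      rintro ⟨p, q⟩ hv
      have i1 := h.le e1 hv
      have i2 := h.le e2 hv
      simp only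
      omega
    rw [r1, r2] at t2
    omega
  rw [c1, c2, Finset.card_map, Finset.card_map, Int.card_Icc, Int.card_Icc] at hC3
  omega

theorem RP.card_of_opp' {B C : Finset (ℤ × ℤ)} (h : RP B C) {a b : ℤ} (e1 : (a, b) ∈ B)
    (e2 : (-a, -b) ∈ B) (hne : (a, b) ≠ (0, 0)) : B.card + C.card = 14 := by
  obtain ⟨c, d, hu, huv⟩ := h.ex1 e1 hne
  obtain ⟨B', C', h', c1, c2, mB, mC, f1, f2⟩ := h.norm e1 hu huv
  rw [← c1, ← c2]
  exact h'.card_of_opp f1 (by rw [mB]; simpa using e2)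

/-- three consecutive collinear boundary points force an opposite pair -/
theorem RP.opp_of_three {B C : Finset (ℤ × ℤ)} (h : RP B C) (m0 : (1, 0) ∈ B)
    (m1 : (1, 1) ∈ B) (m2 : (1, -1) ∈ B) (hu : (-1, 0) ∈ C) :
    ∃ a b : ℤ, (a, b) ∈ B ∧ (-a, -b) ∈ B ∧ (a, b) ≠ (0, 0) := by
  obtain ⟨x, y, hxy, hlt⟩ := h.symm.ex (x := 1) (y := 0) (by simp)
  have hx : x ≤ -1 := by linarith
  -- WLOG style treatment of the sign of `y`
  have key : ∀ s : ℤ, s * s = 1 → 1 ≤ s * y → (1, s) ∈ B → (-1, s) ∈ B := by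
    intro s hs hy hm
    have h01 : (0, s) ∈ B := by
      rw [h.hB]
      intro p q hpq
      have i1 := h.le hxy hpq
      have i2 := h.le hm hpq
      have i3 := h.le m0 hpq
      by_contra hh
      have : q * s ≤ -2 := by linarith
      have hp : 1 ≤ p := by linarith
      have e : q * y = (q * s) * (s * y) := by linear_combination (-(q * y)) * hs
      have k1 := mul_nonneg (sub_nonneg.2 hp) (sub_nonneg.2 hx)
      have k2 := mul_nonneg (sub_nonneg.2 this) (sub_nonneg.2 hy)
      nlinarith
    obtain ⟨p, q, hpq, hv⟩ := h.ex1 h01 (by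
      intro hh
      simp only [Prod.mk.injEq] at hh
      rw [hh.2] at hs; norm_num at hs)
    have i1 := h.le hxy hpq
    have i2 := h.le hm hpq
    have hp : 0 ≤ p := by linarith
    have e : q * y = -(s * y) := by linear_combination (-(q * y)) * hs + s * y * hv
    have hp0 : p = 0 := by
      by_contra hp0
      have hp1 : 1 ≤ p := by omega
      have k1 := mul_nonneg (sub_nonneg.2 hp1) (sub_nonneg.2 hx)
      nlinarith
    subst hp0
    have hys : s * y = 1 := by linarith
    have hy' : y = s := by linear_combination s * hys - y * hs
    subst hy'
    rw [h.hB]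
    intro r t hrt
    have j1 := h.le hxy hrt
    have j2 := h.le hm hrt
    rcases le_total 0 r with hr | hr
    · have := mul_nonneg hr (by linarith : 0 ≤ -1 - x); linarith
    · linarith
  rcases lt_trichotomy y 0 with hy | rfl | hy
  · have := key (-1) (by norm_num) (by linarith) m2
    exact ⟨1, 1, m1, this, by simp⟩
  · refine ⟨1, 0, m0, ?_, by simp⟩
    rw [h.hB]
    intro r t hrt
    have j1 := h.le hxy hrt
    rcases le_total 0 r with hr | hr
    · have := mul_nonneg hr (by linarith : 0 ≤ -1 - x); linarith
    · linarith
  · have := key 1 (by norm_num) (by linarith) m1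
    exact ⟨1, -1, m2, by simpa using this, by simp⟩

theorem RP.opp_of_card {B C : Finset (ℤ × ℤ)} (h : RP B C) (hcard : 5 ≤ B.card) :
    ∃ a b : ℤ, (a, b) ∈ B ∧ (-a, -b) ∈ B ∧ (a, b) ≠ (0, 0) := by
  have hprim : ∀ x y, (x, y) ∈ B.erase (0, 0) → ¬ (x % 2 = 0 ∧ y % 2 = 0) := by
    rintro x y hxy ⟨i1, i2⟩
    rw [Finset.mem_erase] at hxy
    obtain ⟨p, q, hpq, hv⟩ := h.ex1 hxy.2 hxy.1
    obtain ⟨x', rfl⟩ := Int.dvd_of_emod_eq_zero i1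
    obtain ⟨y', rfl⟩ := Int.dvd_of_emod_eq_zero i2
    have : 2 * (p * x' + q * y') = -1 := by linarith
    omega
  have hc : ({(0, 1), (1, 0), (1, 1)} : Finset (ℤ × ℤ)).card < (B.erase (0, 0)).card := by
    rw [Finset.card_erase_of_mem h.zero]
    have : ({(0, 1), (1, 0), (1, 1)} : Finset (ℤ × ℤ)).card = 3 := rfl
    omega
  obtain ⟨⟨x, y⟩, hv, ⟨x', y'⟩, hw, hne, hmod⟩ := Finset.exists_ne_map_eq_of_card_lt_of_maps_to hc
    (f := fun v => (v.1 % 2, v.2 % 2)) (by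
      rintro ⟨x, y⟩ hv
      have := hprim x y hv
      simp only [Finset.coe_insert, Finset.coe_singleton, Set.mem_insert_iff,
        Set.mem_singleton_iff, Prod.mk.injEq]
      omega)
  rw [Finset.mem_erase] at hv hw
  simp only [Prod.mk.injEq] at hmod
  obtain ⟨m, hm⟩ : ∃ m, x + x' = 2 * m := ⟨(x + x') / 2, by omega⟩
  obtain ⟨n, hn⟩ : ∃ n, y + y' = 2 * n := ⟨(y + y') / 2, by omega⟩
  by_cases h0 : (m, n) = (0, 0)
  · simp only [Prod.mk.injEq] at h0
    refine ⟨x, y, hv.2, ?_, hv.1⟩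
    convert hw.2 using 2 <;> omega
  have hmB : (m, n) ∈ B := by
    rw [h.hB]
    intro p q hpq
    have i1 := h.le hv.2 hpq
    have i2 := h.le hw.2 hpq
    have : 2 * (p * m + q * n) = (p * x + q * y) + (p * x' + q * y') := by
      linear_combination (-p) * hm - q * hn
    linarith
  obtain ⟨c, d, hu, huv⟩ := h.ex1 hmB h0
  have i1 := h.le hv.2 hu
  have i2 := h.le hw.2 hu
  have i3 : (c * x + d * y) + (c * x' + d * y') = -2 := by
    linear_combination c * hm + d * hn + 2 * huv
  have j1 : c * x + d * y = -1 := by linarith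
  have j2 : c * x' + d * y' = -1 := by linarith
  obtain ⟨B', C', h', c1, c2, mB, mC, f1, f2⟩ := h.norm hmB hu huv
  -- coordinates of v : (1, k)
  have hk : (1, m * y - n * x) ∈ B' := by
    rw [mB]
    convert hv.2 using 2
    · linear_combination (-x) * huv + m * j1
    · linear_combination (-y) * huv + n * j1
  have hk' : (1, -(m * y - n * x)) ∈ B' := by
    rw [mB]
    convert hw.2 using 2
    · linear_combination -hm + x * huv - m * j1
    · linear_combination -hn + y * huv - n * j1
  have hk0 : m * y - n * x ≠ 0 := by
    intro hk0
    apply hne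
    have e1 : x = m := by linear_combination x * huv - m * j1 + d * hk0
    have e2 : y = n := by linear_combination y * huv - n * j1 - c * hk0
    ext
    · simp only; omega
    · simp only; omega
  have hall : ∀ s : ℤ, s * s = 1 → (1, s) ∈ B' := by
    have gen : ∀ k s : ℤ, 1 ≤ k → (1, k) ∈ B' → (1, -k) ∈ B' → s * s = 1 → (1, s) ∈ B' := by
      intro k s hk l1 l2 hs
      have hs' : s = 1 ∨ s = -1 := by
        have : (s - 1) * (s + 1) = 0 := by linarith
        rcases mul_eq_zero.1 this with h | h
        · left; omega
        · right; omega
      rw [h'.hB]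
      intro p q hpq
      have g1 := h'.le l1 hpq
      have g2 := h'.le l2 hpq
      rcases hs' with rfl | rfl <;> rcases le_total 0 q with hq | hq <;> nlinarith
    intro s hs
    rcases lt_or_gt_of_ne hk0 with hh | hh
    · exact gen _ s (by linarith) hk' (by simpa using hk) hs
    · exact gen _ s (by linarith) hk hk' hs
  obtain ⟨a, b, g1, g2, g3⟩ := h'.opp_of_three f1 (hall 1 (by norm_num))
    (hall (-1) (by norm_num)) f2
  rw [mB] at g1 g2
  refine ⟨_, _, g1, ?_, ?_⟩
  · convert g2 using 2 <;> ring
  · intro hz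
    simp only [Prod.mk.injEq] at hz
    apply g3
    have e1 : a = 0 := by linear_combination (-c) * hz.1 - d * hz.2 + a * huv
    have e2 : b = 0 := by linear_combination (-n) * hz.1 + m * hz.2 + b * huv
    rw [e1, e2]

theorem RP.card_eq {B C : Finset (ℤ × ℤ)} (h : RP B C) : B.card + C.card = 14 := by
  by_cases hc : 5 ≤ B.card
  · obtain ⟨a, b, h1, h2, h3⟩ := h.opp_of_card hc
    exact h.card_of_opp' h1 h2 h3
  push Not at hc
  obtain ⟨v, w, hvB, hlt⟩ := h.symm.ex (x := 1) (y := 0) (by simp)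
  have hv0 : (v, w) ≠ (0, 0) := by
    intro hh
    simp only [Prod.mk.injEq] at hh
    omega
  obtain ⟨x, y, c, d, hw, hdet, hu, huv, huw⟩ := h.succ hvB hv0
  obtain ⟨B', C', h', c1, c2, mB, mC, f1, f2⟩ := h.norm hvB hu huv
  rw [← c1, ← c2]
  rw [← c1] at hc
  have g11 : (1, 1) ∈ B' := by
    rw [mB]
    convert hw using 2
    · linear_combination (-x) * huv + v * huw - d * hdet
    · linear_combination (-y) * huv + w * huw + c * hdet
  obtain ⟨x2, y2, _, _, hw2, hdet2, -, -, -⟩ := h'.succ g11 (by simp)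
  obtain ⟨B2, C2, h2, -, -, mB2, mC2⟩ := h'.trans 1 0 0 (-1) (-1) (by norm_num) (by norm_num)
  obtain ⟨x3, y3, _, _, hw3, hdet3, -, -, -⟩ := h2.succ (a := 1) (b := 0)
    (by rw [mB2]; simpa using f1) (by simp)
  obtain rfl : y3 = 1 := by linarith
  rw [mB2] at hw3
  have hw3' : (x3, -1) ∈ B' := by convert hw3 using 2 <;> ring
  obtain rfl : y2 = x2 + 1 := by linarith
  -- B' ∋ 0, (1,0), (1,1), (x2, x2+1), (x3, -1)
  have hsub : ({(0, 0), (1, 0), (1, 1), (x2, x2 + 1), (x3, -1)} : Finset (ℤ × ℤ)) ⊆ B' := by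
    intro z hz
    simp only [Finset.mem_insert, Finset.mem_singleton] at hz
    rcases hz with rfl | rfl | rfl | rfl | rfl
    · exact h'.zero
    · exact f1
    · exact g11
    · exact hw2
    · exact hw3'
  have heq : x2 = -2 ∧ x3 = -2 := by
    by_contra hne
    have hle := Finset.card_le_card hsub
    rw [Finset.card_insert_of_notMem, Finset.card_insert_of_notMem,
      Finset.card_insert_of_notMem, Finset.card_insert_of_notMem, Finset.card_singleton] at hle
    · omega
    all_goals
      simp only [Finset.mem_insert, Finset.mem_singleton, Prod.mk.injEq]
      omega
  obtain ⟨rfl, rfl⟩ := heq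
  have hBeq : ({(0, 0), (1, 0), (1, 1), (-2, -1)} : Finset (ℤ × ℤ)) = B' := by
    refine Finset.eq_of_subset_of_card_le ?_ ?_
    · intro z hz
      apply hsub
      simp only [Finset.mem_insert, Finset.mem_singleton] at hz ⊢
      rcases hz with rfl | rfl | rfl | rfl <;> simp
    · have : ({(0, 0), (1, 0), (1, 1), (-2, -1)} : Finset (ℤ × ℤ)).card = 4 := rfl
      omega
  have hmem : ∀ x y, (x, y) ∈ B' → (x = 0 ∧ y = 0) ∨ (x = 1 ∧ y = 0) ∨ (x = 1 ∧ y = 1) ∨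
      (x = -2 ∧ y = -1) := by
    intro x y hxy
    rw [← hBeq] at hxy
    simpa using hxy
  have := h'.symm.card_of_opp' (a := 0) (b := 1) (by
    rw [h'.hC]
    intro x y hxy
    rcases hmem x y hxy with ⟨rfl, rfl⟩ | ⟨rfl, rfl⟩ | ⟨rfl, rfl⟩ | ⟨rfl, rfl⟩ <;> norm_num) (by
    rw [h'.hC]
    intro x y hxy
    rcases hmem x y hxy with ⟨rfl, rfl⟩ | ⟨rfl, rfl⟩ | ⟨rfl, rfl⟩ | ⟨rfl, rfl⟩ <;> norm_num)
    (by simp)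
  omega


/-- embedding of lattice pairs in the plane -/
def embZ (n : ℤ × ℤ) : Fin 2 → ℝ := ![(n.1 : ℝ), (n.2 : ℝ)]

def triOpen : Set (Fin 2 → ℝ) := {x | 0 < x 0 ∧ 0 < x 1 ∧ x 0 + x 1 < 1}
def triClosed : Set (Fin 2 → ℝ) := {x | 0 ≤ x 0 ∧ 0 ≤ x 1 ∧ x 0 + x 1 ≤ 1}

theorem triOpen_meas : MeasurableSet triOpen := by
  have : IsOpen triOpen := by
    have h1 := isOpen_lt (continuous_const (y := (0 : ℝ))) (continuous_apply (A := fun _ : Fin 2 => ℝ) 0)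
    have h2 := isOpen_lt (continuous_const (y := (0 : ℝ))) (continuous_apply (A := fun _ : Fin 2 => ℝ) 1)
    have h3 := isOpen_lt ((continuous_apply (A := fun _ : Fin 2 => ℝ) 0).add
      (continuous_apply (A := fun _ : Fin 2 => ℝ) 1)) (continuous_const (y := (1 : ℝ)))
    exact h1.inter (h2.inter h3)
  exact this.measurableSet

theorem triClosed_meas : MeasurableSet triClosed := by
  have : IsClosed triClosed := by
    have h1 := isClosed_le (continuous_const (y := (0 : ℝ))) (continuous_apply (A := fun _ : Fin 2 => ℝ) 0)
    have h2 := isClosed_le (continuous_const (y := (0 : ℝ))) (continuous_apply (A := fun _ : Fin 2 => ℝ) 1)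
    have h3 := isClosed_le ((continuous_apply (A := fun _ : Fin 2 => ℝ) 0).add
      (continuous_apply (A := fun _ : Fin 2 => ℝ) 1)) (continuous_const (y := (1 : ℝ)))
    exact h1.inter (h2.inter h3)
  exact this.measurableSet

theorem int_half : ∫⁻ x in Set.Icc (0:ℝ) 1, ENNReal.ofReal (1 - x) = ENNReal.ofReal (1/2) := by
  rw [← ofReal_integral_eq_lintegral_ofReal]
  · rw [integral_Icc_eq_integral_Ioc, ← intervalIntegral.integral_of_le zero_le_one]
    congr 1
    rw [intervalIntegral.integral_sub (by simp) (by simp)]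
    simp
    norm_num
  · exact (Continuous.integrableOn_Icc (by fun_prop))
  · filter_upwards [ae_restrict_mem measurableSet_Icc] with x hx
    simpa using hx.2

theorem triOpen_vol : volume triOpen = ENNReal.ofReal (1/2) := by
  have e := (volume_preserving_finTwoArrow ℝ).symm.measure_preimage
    triOpen_meas.nullMeasurableSet
  rw [← e, Measure.volume_eq_prod, Measure.prod_apply
    ((MeasurableEquiv.finTwoArrow (α := ℝ)).symm.measurable triOpen_meas)]
  rw [← int_half, ← lintegral_indicator measurableSet_Icc]
  refine lintegral_congr_ae ?_
  have h0 : ∀ᵐ x : ℝ, x ≠ 0 := by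
    simp [ae_iff]
  filter_upwards [h0] with x hx
  by_cases hx1 : x ∈ Set.Icc (0:ℝ) 1
  · rw [Set.indicator_of_mem hx1]
    have : Prod.mk x ⁻¹' (⇑(MeasurableEquiv.finTwoArrow (α := ℝ)).symm ⁻¹' triOpen)
        = Set.Ioo 0 (1 - x) := by
      ext y
      simp only [Set.mem_preimage, triOpen, Set.mem_ofPred_eq, Set.mem_Ioo]
      change (0 < x ∧ 0 < y ∧ x + y < 1) ↔ _
      have : 0 < x := lt_of_le_of_ne hx1.1 (Ne.symm hx)
      constructor
      · rintro ⟨_, h1, h2⟩; exact ⟨h1, by linarith⟩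
      · rintro ⟨h1, h2⟩; exact ⟨this, h1, by linarith⟩
    rw [this, Real.volume_Ioo, sub_zero]
  · rw [Set.indicator_of_notMem hx1]
    have : Prod.mk x ⁻¹' (⇑(MeasurableEquiv.finTwoArrow (α := ℝ)).symm ⁻¹' triOpen) = ∅ := by
      ext y
      simp only [Set.mem_preimage, triOpen, Set.mem_ofPred_eq, Set.mem_empty_iff_false, iff_false]
      change ¬ (0 < x ∧ 0 < y ∧ x + y < 1)
      rintro ⟨h1, h2, h3⟩
      exact hx1 ⟨h1.le, by linarith⟩
    rw [this, measure_empty]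

theorem triClosed_vol : volume triClosed = ENNReal.ofReal (1/2) := by
  have e := (volume_preserving_finTwoArrow ℝ).symm.measure_preimage
    triClosed_meas.nullMeasurableSet
  rw [← e, Measure.volume_eq_prod, Measure.prod_apply
    ((MeasurableEquiv.finTwoArrow (α := ℝ)).symm.measurable triClosed_meas)]
  rw [← int_half, ← lintegral_indicator measurableSet_Icc]
  refine lintegral_congr ?_
  intro x
  by_cases hx1 : x ∈ Set.Icc (0:ℝ) 1
  · rw [Set.indicator_of_mem hx1]
    have : Prod.mk x ⁻¹' (⇑(MeasurableEquiv.finTwoArrow (α := ℝ)).symm ⁻¹' triClosed)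
        = Set.Icc 0 (1 - x) := by
      ext y
      simp only [Set.mem_preimage, triClosed, Set.mem_ofPred_eq, Set.mem_Icc]
      change (0 ≤ x ∧ 0 ≤ y ∧ x + y ≤ 1) ↔ _
      constructor
      · rintro ⟨_, h1, h2⟩; exact ⟨h1, by linarith⟩
      · rintro ⟨h1, h2⟩; exact ⟨hx1.1, h1, by linarith⟩
    rw [this, Real.volume_Icc, sub_zero]
  · rw [Set.indicator_of_notMem hx1]
    have : Prod.mk x ⁻¹' (⇑(MeasurableEquiv.finTwoArrow (α := ℝ)).symm ⁻¹' triClosed) = ∅ := by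
      ext y
      simp only [Set.mem_preimage, triClosed, Set.mem_ofPred_eq, Set.mem_empty_iff_false,
        iff_false]
      change ¬ (0 ≤ x ∧ 0 ≤ y ∧ x + y ≤ 1)
      rintro ⟨h1, h2, h3⟩
      exact hx1 ⟨h1, by linarith⟩
    rw [this, measure_empty]

/-- coordinates with respect to the basis `z.1, z.2` -/
noncomputable def coordMap (z : (ℤ × ℤ) × (ℤ × ℤ)) : (Fin 2 → ℝ) →ₗ[ℝ] (Fin 2 → ℝ) :=
  Matrix.toLin' !![(z.2.2 : ℝ), -(z.2.1 : ℝ); -(z.1.2 : ℝ), (z.1.1 : ℝ)]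

theorem coordMap_zero (z : (ℤ × ℤ) × (ℤ × ℤ)) (x : Fin 2 → ℝ) :
    coordMap z x 0 = x 0 * z.2.2 - x 1 * z.2.1 := by
  simp [coordMap, Matrix.mulVec, dotProduct, Fin.sum_univ_two]
  ring

theorem coordMap_one (z : (ℤ × ℤ) × (ℤ × ℤ)) (x : Fin 2 → ℝ) :
    coordMap z x 1 = x 1 * z.1.1 - x 0 * z.1.2 := by
  simp [coordMap, Matrix.mulVec, dotProduct, Fin.sum_univ_two]
  ring

theorem coordMap_vol (z : (ℤ × ℤ) × (ℤ × ℤ)) (hz : z.1.1 * z.2.2 - z.1.2 * z.2.1 = 1)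
    (s : Set (Fin 2 → ℝ)) : volume (coordMap z ⁻¹' s) = volume s := by
  have hdet : LinearMap.det (coordMap z) = 1 := by
    rw [coordMap, LinearMap.det_toLin', Matrix.det_fin_two_of]
    have : ((z.1.1 * z.2.2 - z.1.2 * z.2.1 : ℤ) : ℝ) = 1 := by rw [hz]; simp
    push_cast at this
    linarith
  rw [Measure.addHaar_preimage_linearMap volume (by rw [hdet]; norm_num), hdet]
  simp

theorem coordMap_meas (z : (ℤ × ℤ) × (ℤ × ℤ)) {s : Set (Fin 2 → ℝ)} (hs : MeasurableSet s) :
    MeasurableSet (coordMap z ⁻¹' s) :=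
  (LinearMap.continuous_of_finiteDimensional (coordMap z)).measurable hs

theorem lex_hull {S : Set (Fin 2 → ℝ)} (f l : (Fin 2 → ℝ) →ₗ[ℝ] ℝ) {c : ℝ}
    (hS : ∀ y ∈ S, c ≤ f y) {z : Fin 2 → ℝ} (hz : z ∈ convexHull ℝ S) (hfz : f z = c) :
    ∃ y ∈ S, f y = c ∧ l y ≤ l z := by
  by_contra hcon
  push Not at hcon
  have hK : Convex ℝ {y : Fin 2 → ℝ | c ≤ f y ∧ (f y = c → l z < l y)} := by
    rintro y1 ⟨h1, h1'⟩ y2 ⟨h2, h2'⟩ a b ha hb hab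
    rcases eq_or_lt_of_le ha with rfl | ha
    · obtain rfl : b = 1 := by linarith
      simpa using ⟨h2, h2'⟩
    rcases eq_or_lt_of_le hb with rfl | hb
    · obtain rfl : a = 1 := by linarith
      simpa using ⟨h1, h1'⟩
    simp only [Set.mem_ofPred_eq, map_add, map_smul, smul_eq_mul]
    have k1 := mul_nonneg ha.le (sub_nonneg.2 h1)
    have k2 := mul_nonneg hb.le (sub_nonneg.2 h2)
    have e : c = a * c + b * c := by rw [← add_mul, hab, one_mul]
    refine ⟨by linarith, fun heq => ?_⟩
    have e1 : a * (f y1 - c) = 0 := by linarith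
    have e2 : b * (f y2 - c) = 0 := by linarith
    have i1 := h1' (by rcases mul_eq_zero.1 e1 with h | h <;> linarith)
    have i2 := h2' (by rcases mul_eq_zero.1 e2 with h | h <;> linarith)
    have j1 := mul_pos ha (sub_pos.2 i1)
    have j2 := mul_pos hb (sub_pos.2 i2)
    have e' : l z = a * l z + b * l z := by rw [← add_mul, hab, one_mul]
    linarith
  have hsub : S ⊆ {y : Fin 2 → ℝ | c ≤ f y ∧ (f y = c → l z < l y)} :=
    fun y hy => ⟨hS y hy, fun h => hcon y hy h⟩
  have := convexHull_min hsub hK hz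
  exact lt_irrefl _ (this.2 hfz)

theorem tri_disj {a b a' b' : ℤ} {B C : Finset (ℤ × ℤ)} (h : RP B C) {x y x' y' c d c' d' : ℤ}
    (hv : (a, b) ∈ B) (hw : (x, y) ∈ B) (hdet : a * y - b * x = 1)
    (hu : (c, d) ∈ C) (huv : c * a + d * b = -1) (huw : c * x + d * y = -1)
    (hv' : (a', b') ∈ B) (hw' : (x', y') ∈ B) (hdet' : a' * y' - b' * x' = 1)
    (hu' : (c', d') ∈ C) (huv' : c' * a' + d' * b' = -1) (huw' : c' * x' + d' * y' = -1)
    {r s r' s' : ℝ} (hr : 0 < r) (hs : 0 < s) (hr' : 0 < r') (hs' : 0 < s')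
    (e1 : r * a + s * x = r' * a' + s' * x') (e2 : r * b + s * y = r' * b' + s' * y') :
    a = a' ∧ b = b' ∧ x = x' ∧ y = y' := by
  have i1 := h.le hv' hu
  have i2 := h.le hw' hu
  have i3 := h.le hv hu'
  have i4 := h.le hw hu'
  have R1 : (-1 : ℝ) ≤ c * a' + d * b' := by exact_mod_cast i1
  have R2 : (-1 : ℝ) ≤ c * x' + d * y' := by exact_mod_cast i2
  have R3 : (-1 : ℝ) ≤ c' * a + d' * b := by exact_mod_cast i3
  have R4 : (-1 : ℝ) ≤ c' * x + d' * y := by exact_mod_cast i4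
  have Q1 : (c : ℝ) * a + d * b = -1 := by exact_mod_cast huv
  have Q2 : (c : ℝ) * x + d * y = -1 := by exact_mod_cast huw
  have Q3 : (c' : ℝ) * a' + d' * b' = -1 := by exact_mod_cast huv'
  have Q4 : (c' : ℝ) * x' + d' * y' = -1 := by exact_mod_cast huw'
  have k1 := mul_nonneg hr'.le (by linarith : (0 : ℝ) ≤ c * a' + d * b' + 1)
  have k2 := mul_nonneg hs'.le (by linarith : (0 : ℝ) ≤ c * x' + d * y' + 1)
  have k3 := mul_nonneg hr.le (by linarith : (0 : ℝ) ≤ c' * a + d' * b + 1)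
  have k4 := mul_nonneg hs.le (by linarith : (0 : ℝ) ≤ c' * x + d' * y + 1)
  have m1 : r' * (c * a' + d * b' + 1) + s' * (c * x' + d * y' + 1) = (r' + s') - (r + s) := by
    linear_combination -c * e1 - d * e2 + r * Q1 + s * Q2
  have m2 : r * (c' * a + d' * b + 1) + s * (c' * x + d' * y + 1) = (r + s) - (r' + s') := by
    linear_combination c' * e1 + d' * e2 + r' * Q3 + s' * Q4
  have n1 : r' * ((c : ℝ) * a' + d * b' + 1) = 0 := by linarith
  have n2 : s' * ((c : ℝ) * x' + d * y' + 1) = 0 := by linarith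
  have P1 : c * a' + d * b' = -1 := by
    rcases mul_eq_zero.1 n1 with h | h
    · linarith
    · have : (c : ℝ) * a' + d * b' = -1 := by linarith
      exact_mod_cast this
  have P2 : c * x' + d * y' = -1 := by
    rcases mul_eq_zero.1 n2 with h | h
    · linarith
    · have : (c : ℝ) * x' + d * y' = -1 := by linarith
      exact_mod_cast this
  obtain ⟨k, hk⟩ : ∃ k, k = a * b' - b * a' := ⟨_, rfl⟩
  have t1 : x = a + d := by linear_combination x * huv - a * huw + d * hdet
  have t2 : y = b - c := by linear_combination y * huv - b * huw - c * hdet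
  have t1' : x' = a' + d := by linear_combination x' * P1 - a' * P2 + d * hdet'
  have t2' : y' = b' - c := by linear_combination y' * P1 - b' * P2 - c * hdet'
  have v1 : a' = a + k * d := by rw [hk]; linear_combination a' * huv - a * P1
  have v2 : b' = b - k * c := by rw [hk]; linear_combination b' * huv - b * P1
  have hb : s = r' * k + s' * (k + 1) := by
    have D : (a : ℝ) * y - b * x = 1 := by exact_mod_cast hdet
    have V1 : (a' : ℝ) = a + k * d := by exact_mod_cast v1
    have V2 : (b' : ℝ) = b - k * c := by exact_mod_cast v2
    have T1' : (x' : ℝ) = a' + d := by exact_mod_cast t1'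
    have T2' : (y' : ℝ) = b' - c := by exact_mod_cast t2'
    rw [T1', V1] at e1
    rw [T2', V2] at e2
    linear_combination (-s) * D + a * e2 - b * e1 - (r' * k + s' * (k + 1)) * Q1
  have hrs : r + s = r' + s' := by linarith
  have k0 : k = 0 := by
    rcases lt_trichotomy k 0 with hk0 | hk0 | hk0
    · have : k ≤ -1 := by omega
      have : (k : ℝ) ≤ -1 := by exact_mod_cast this
      nlinarith
    · exact hk0
    · have : 1 ≤ k := by omega
      have : (1 : ℝ) ≤ k := by exact_mod_cast this
      nlinarith
  subst k0
  refine ⟨?_, ?_, ?_, ?_⟩ <;> linarith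

/-- the successor pairs -/
def succPairs (B C : Finset (ℤ × ℤ)) : Finset ((ℤ × ℤ) × (ℤ × ℤ)) :=
  (B ×ˢ B).filter fun z => z.1.1 * z.2.2 - z.1.2 * z.2.1 = 1 ∧
    ∃ u ∈ C, u.1 * z.1.1 + u.2 * z.1.2 = -1 ∧ u.1 * z.2.1 + u.2 * z.2.2 = -1

theorem mem_succPairs {B C : Finset (ℤ × ℤ)} {a b x y : ℤ} :
    ((a, b), (x, y)) ∈ succPairs B C ↔ (a, b) ∈ B ∧ (x, y) ∈ B ∧ a * y - b * x = 1 ∧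
      ∃ c d : ℤ, (c, d) ∈ C ∧ c * a + d * b = -1 ∧ c * x + d * y = -1 := by
  simp only [succPairs, Finset.mem_filter, Finset.mem_product, Prod.exists, and_assoc]

theorem RP.card_succPairs {B C : Finset (ℤ × ℤ)} (h : RP B C) :
    (succPairs B C).card = B.card - 1 := by
  rw [← Finset.card_erase_of_mem h.zero]
  refine Finset.card_bij (fun z _ => z.1) ?_ ?_ ?_
  · rintro ⟨⟨a, b⟩, ⟨x, y⟩⟩ hz
    obtain ⟨h1, h2, h3, -⟩ := mem_succPairs.1 hz
    rw [Finset.mem_erase]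
    refine ⟨?_, h1⟩
    intro hh
    simp only [Prod.mk.injEq] at hh
    rw [hh.1, hh.2] at h3
    norm_num at h3
  · rintro ⟨⟨a, b⟩, ⟨x, y⟩⟩ hz ⟨⟨a', b'⟩, ⟨x', y'⟩⟩ hz' heq
    simp only [Prod.mk.injEq] at heq
    obtain ⟨rfl, rfl⟩ := heq
    obtain ⟨h1, h2, h3, c, d, h4, h5, h6⟩ := mem_succPairs.1 hz
    obtain ⟨h1', h2', h3', c', d', h4', h5', h6'⟩ := mem_succPairs.1 hz'
    obtain ⟨rfl, rfl⟩ := h.succ_unique h2 h3 h4 h5 h6 h2' h3' h4' h5' h6'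
    rfl
  · rintro ⟨a, b⟩ hv
    rw [Finset.mem_erase] at hv
    obtain ⟨x, y, c, d, h1, h2, h3, h4, h5⟩ := h.succ hv.2 hv.1
    exact ⟨((a, b), (x, y)), mem_succPairs.2 ⟨hv.2, h1, h2, c, d, h3, h4, h5⟩, rfl⟩

theorem RP.cover {B C : Finset (ℤ × ℤ)} (h : RP B C) {P : Set (Fin 2 → ℝ)}
    (hbdd : Bornology.IsBounded P)
    (hconv : P = convexHull ℝ (embZ '' (B : Set (ℤ × ℤ))))
    (hpol : ∀ x, x ∈ P ↔ ∀ p q : ℤ, (p, q) ∈ C → (-1 : ℝ) ≤ p * x 0 + q * x 1)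
    {x : Fin 2 → ℝ} (hx : x ∈ P) : ∃ z ∈ succPairs B C, coordMap z x ∈ triClosed := by
  by_cases hx0 : x = 0
  · obtain ⟨v, w, hvB, hlt⟩ := h.symm.ex (x := 1) (y := 0) (by simp)
    have hv0 : (v, w) ≠ (0, 0) := by
      intro hh
      simp only [Prod.mk.injEq] at hh
      omega
    obtain ⟨x', y', c, d, h1, h2, h3, h4, h5⟩ := h.succ hvB hv0
    refine ⟨((v, w), (x', y')), mem_succPairs.2 ⟨hvB, h1, h2, c, d, h3, h4, h5⟩, ?_⟩
    rw [hx0, map_zero]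
    simp [triClosed]
  obtain ⟨⟨c, d⟩, hu, hmin⟩ := Finset.exists_min_image C
    (fun u => (u.1 : ℝ) * x 0 + u.2 * x 1) ⟨(0, 0), h.symm.zero⟩
  simp only at hmin
  obtain ⟨g, hg⟩ : ∃ g : ℝ, g = -(c * x 0 + d * x 1) := ⟨_, rfl⟩
  have hg1 : g ≤ 1 := by
    have := (hpol x).1 hx c d hu
    linarith
  have hg0 : 0 < g := by
    by_contra hneg
    have hall : ∀ n : ℕ, (n : ℝ) • x ∈ P := by
      intro n
      rw [hpol]
      intro p q hpq
      have h1 := hmin (p, q) hpq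
      simp only at h1
      have h2 : 0 ≤ (p : ℝ) * x 0 + q * x 1 := by linarith
      have h3 : 0 ≤ (n : ℝ) * ((p : ℝ) * x 0 + q * x 1) := by positivity
      simp only [Pi.smul_apply, smul_eq_mul]
      linarith
    obtain ⟨R, hR⟩ := hbdd.exists_norm_le
    have hpos : 0 < ‖x‖ := norm_pos_iff.2 hx0
    obtain ⟨n, hn⟩ := exists_nat_gt (R / ‖x‖)
    have h1 := hR _ (hall n)
    rw [norm_smul, Real.norm_natCast] at h1
    rw [div_lt_iff₀ hpos] at hn
    linarith
  obtain ⟨z, hz⟩ : ∃ z : Fin 2 → ℝ, z = g⁻¹ • x := ⟨_, rfl⟩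
  have hxz0 : x 0 = g * z 0 := by
    rw [hz]; simp only [Pi.smul_apply, smul_eq_mul]; field_simp
  have hxz1 : x 1 = g * z 1 := by
    rw [hz]; simp only [Pi.smul_apply, smul_eq_mul]; field_simp
  have hzP : z ∈ P := by
    rw [hpol]
    intro p q hpq
    have h1 := hmin (p, q) hpq
    simp only at h1
    have h2 : -g ≤ g * (p * z 0 + q * z 1) := by
      rw [hxz0, hxz1] at h1 hg
      linarith
    by_contra hcon
    push Not at hcon
    have := mul_lt_mul_of_pos_left hcon hg0
    linarith
  have huz : (c : ℝ) * z 0 + d * z 1 = -1 := by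
    rw [hxz0, hxz1] at hg
    have : g * ((c : ℝ) * z 0 + d * z 1 + 1) = 0 := by linarith
    rcases mul_eq_zero.1 this with h | h <;> linarith
  let f : (Fin 2 → ℝ) →ₗ[ℝ] ℝ :=
    (c : ℝ) • LinearMap.proj 0 + (d : ℝ) • LinearMap.proj 1
  let l : (Fin 2 → ℝ) →ₗ[ℝ] ℝ :=
    (d : ℝ) • LinearMap.proj 0 - (c : ℝ) • LinearMap.proj 1
  have hf : ∀ y, f y = c * y 0 + d * y 1 := fun y => by simp [f]
  have hl : ∀ y, l y = d * y 0 - c * y 1 := fun y => by simp [l]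
  have hS : ∀ y ∈ embZ '' (B : Set (ℤ × ℤ)), -1 ≤ f y := by
    rintro _ ⟨⟨a, b⟩, hab, rfl⟩
    rw [hf]
    have := h.le hab hu
    simp only [embZ, Matrix.cons_val_zero, Matrix.cons_val_one]
    exact_mod_cast this
  rw [hconv] at hzP
  obtain ⟨_, ⟨⟨a, b⟩, hab, rfl⟩, hf1, hl1⟩ := lex_hull f l hS hzP (by rw [hf, huz])
  obtain ⟨_, ⟨⟨a2, b2⟩, hab2, rfl⟩, hf2, hl2⟩ := lex_hull f (-l) hS hzP (by rw [hf, huz])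
  rw [LinearMap.neg_apply, LinearMap.neg_apply] at hl2
  rw [hf] at hf1 hf2
  rw [hl, hl] at hl1 hl2
  simp only [embZ, Matrix.cons_val_zero, Matrix.cons_val_one] at hf1 hf2 hl1 hl2
  have huv : c * a + d * b = -1 := by exact_mod_cast hf1
  have huv2 : c * a2 + d * b2 = -1 := by exact_mod_cast hf2
  obtain ⟨τ, hτ⟩ : ∃ τ : ℝ, τ = a * z 1 - b * z 0 := ⟨_, rfl⟩
  obtain ⟨k, hk⟩ : ∃ k : ℤ, k = a * b2 - b * a2 := ⟨_, rfl⟩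
  have z0 : z 0 = a + τ * d := by rw [hτ]; linear_combination z 0 * hf1 - a * huz
  have z1 : z 1 = b - τ * c := by rw [hτ]; linear_combination z 1 * hf1 - b * huz
  have va : a2 = a + k * d := by rw [hk]; linear_combination a2 * huv - a * huv2
  have vb : b2 = b - k * c := by rw [hk]; linear_combination b2 * huv - b * huv2
  have va' : (a2 : ℝ) = a + k * d := by exact_mod_cast va
  have vb' : (b2 : ℝ) = b - k * c := by exact_mod_cast vb
  have hcd : (0 : ℝ) < d * d + c * c := by
    rcases eq_or_ne c 0 with h0 | h0
    · have : d ≠ 0 := by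
        rintro rfl; rw [h0] at huv; norm_num at huv
      have : (d : ℝ) ≠ 0 := by exact_mod_cast this
      have := mul_self_pos.2 this
      have := mul_self_nonneg (c : ℝ)
      linarith
    · have : (c : ℝ) ≠ 0 := by exact_mod_cast h0
      have := mul_self_pos.2 this
      have := mul_self_nonneg (d : ℝ)
      linarith
  have hτ0 : 0 ≤ τ := by
    rw [z0, z1] at hl1
    have : 0 ≤ τ * (d * d + c * c) := by linarith
    exact nonneg_of_mul_nonneg_left this hcd
  have hτk : τ ≤ k := by
    rw [z0, z1, va', vb'] at hl2
    have : 0 ≤ (k - τ) * (d * d + c * c) := by linarith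
    have := nonneg_of_mul_nonneg_left this hcd
    linarith
  have hmem : ∀ j : ℤ, 0 ≤ j → j ≤ k → (a + j * d, b - j * c) ∈ B := by
    intro j hj0 hjk
    rw [h.hB]
    intro p q hpq
    have i1 := h.le hab hpq
    have i2 := h.le hab2 hpq
    rw [va, vb] at i2
    rcases le_total 0 (p * d - q * c) with hs | hs
    · have := mul_nonneg hj0 hs
      linarith
    · have := mul_nonneg (sub_nonneg.2 hjk) (neg_nonneg.2 hs)
      linarith
  rcases eq_or_lt_of_le hτk with heq | hlt
  · have hne : (a2, b2) ≠ (0, 0) := by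
      intro hh
      simp only [Prod.mk.injEq] at hh
      rw [hh.1, hh.2] at huv2
      norm_num at huv2
    obtain ⟨x', y', c', d', h1, h2, h3, h4, h5⟩ := h.succ hab2 hne
    refine ⟨((a2, b2), (x', y')), mem_succPairs.2 ⟨hab2, h1, h2, c', d', h3, h4, h5⟩, ?_⟩
    have h2' : (a2 : ℝ) * y' - b2 * x' = 1 := by exact_mod_cast h2
    have e0 : x 0 = g * a2 := by rw [hxz0, z0, heq, va']
    have e1 : x 1 = g * b2 := by rw [hxz1, z1, heq, vb']
    have E0 : coordMap ((a2, b2), (x', y')) x 0 = g := by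
      rw [coordMap_zero, e0, e1]; linear_combination g * h2'
    have E1 : coordMap ((a2, b2), (x', y')) x 1 = 0 := by
      rw [coordMap_one, e0, e1]; ring
    change 0 ≤ _ ∧ 0 ≤ _ ∧ _ ≤ _
    rw [E0, E1]
    exact ⟨hg0.le, le_rfl, by linarith⟩
  · have hj0 : 0 ≤ ⌊τ⌋ := Int.floor_nonneg.2 hτ0
    have hjk : ⌊τ⌋ + 1 ≤ k := by
      have := Int.floor_lt.2 hlt
      omega
    have hf1' := Int.floor_le τ
    have hf2' := Int.lt_floor_add_one τ
    generalize ⌊τ⌋ = j at hj0 hjk hf1' hf2'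
    refine ⟨((a + j * d, b - j * c), (a + (j + 1) * d, b - (j + 1) * c)), mem_succPairs.2
      ⟨hmem j hj0 (by omega), hmem (j + 1) (by omega) hjk, ?_, c, d, hu, ?_, ?_⟩, ?_⟩
    · linear_combination -huv
    · linear_combination huv
    · linear_combination huv
    · change 0 ≤ _ ∧ 0 ≤ _ ∧ _ ≤ _
      rw [coordMap_zero, coordMap_one, hxz0, hxz1, z0, z1]
      push_cast
      have E0 : g * (a + τ * d) * (b - (j + 1) * c) - g * (b - τ * c) * (a + (j + 1) * d)
          = g * (j + 1 - τ) := by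
        linear_combination (-(g * (j + 1 - τ))) * hf1
      have E1 : g * (b - τ * c) * (a + j * d) - g * (a + τ * d) * (b - j * c)
          = g * (τ - j) := by
        linear_combination (-(g * (τ - j))) * hf1
      rw [E0, E1]
      refine ⟨mul_nonneg hg0.le (by linarith), mul_nonneg hg0.le (by linarith), by linarith⟩

theorem pair_coords {a b x y : ℤ} (hdet : a * y - b * x = 1) (X : Fin 2 → ℝ) :
    X 0 = coordMap ((a, b), (x, y)) X 0 * a + coordMap ((a, b), (x, y)) X 1 * x ∧
    X 1 = coordMap ((a, b), (x, y)) X 0 * b + coordMap ((a, b), (x, y)) X 1 * y := by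
  have hd : (a : ℝ) * y - b * x = 1 := by exact_mod_cast hdet
  rw [coordMap_zero, coordMap_one]
  constructor
  · linear_combination (-(X 0)) * hd
  · linear_combination (-(X 1)) * hd

theorem RP.pick {B C : Finset (ℤ × ℤ)} (h : RP B C) {P : Set (Fin 2 → ℝ)}
    (hbdd : Bornology.IsBounded P)
    (hconv : P = convexHull ℝ (embZ '' (B : Set (ℤ × ℤ))))
    (hpol : ∀ x, x ∈ P ↔ ∀ p q : ℤ, (p, q) ∈ C → (-1 : ℝ) ≤ p * x 0 + q * x 1) :
    2 * (volume P).toReal = (B.card : ℝ) - 1 := by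
  have hdetT : ∀ z ∈ succPairs B C, z.1.1 * z.2.2 - z.1.2 * z.2.1 = 1 := by
    rintro ⟨⟨a, b⟩, ⟨x, y⟩⟩ hz
    exact (mem_succPairs.1 hz).2.2.1
  have upper : volume P ≤ (succPairs B C).card * ENNReal.ofReal (1/2) := by
    calc volume P ≤ volume (⋃ z ∈ succPairs B C, coordMap z ⁻¹' triClosed) := by
          refine measure_mono fun x hx => ?_
          obtain ⟨z, hz, hzx⟩ := h.cover hbdd hconv hpol hx
          simp only [Set.mem_iUnion]
          exact ⟨z, hz, hzx⟩
      _ ≤ ∑ z ∈ succPairs B C, volume (coordMap z ⁻¹' triClosed) :=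
          measure_biUnion_finset_le _ _
      _ = ∑ z ∈ succPairs B C, ENNReal.ofReal (1/2) := by
          refine Finset.sum_congr rfl fun z hz => ?_
          rw [coordMap_vol z (hdetT z hz), triClosed_vol]
      _ = _ := by rw [Finset.sum_const, nsmul_eq_mul]
  have lower : (succPairs B C).card * ENNReal.ofReal (1/2) ≤ volume P := by
    calc (succPairs B C).card * ENNReal.ofReal (1/2)
        = ∑ z ∈ succPairs B C, ENNReal.ofReal (1/2) := by rw [Finset.sum_const, nsmul_eq_mul]
      _ = ∑ z ∈ succPairs B C, volume (coordMap z ⁻¹' triOpen) := by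
          refine Finset.sum_congr rfl fun z hz => ?_
          rw [coordMap_vol z (hdetT z hz), triOpen_vol]
      _ = volume (⋃ z ∈ succPairs B C, coordMap z ⁻¹' triOpen) := by
          rw [measure_biUnion_finset]
          · rintro ⟨⟨a, b⟩, ⟨x, y⟩⟩ hz ⟨⟨a', b'⟩, ⟨x', y'⟩⟩ hz' hne
            rw [Function.onFun, Set.disjoint_left]
            rintro X ⟨i1, i2, -⟩ ⟨j1, j2, -⟩
            apply hne
            obtain ⟨h1, h2, h3, c, d, h4, h5, h6⟩ := mem_succPairs.1 hz
            obtain ⟨h1', h2', h3', c', d', h4', h5', h6'⟩ := mem_succPairs.1 hz'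
            obtain ⟨m1, m2⟩ := pair_coords h3 X
            obtain ⟨n1, n2⟩ := pair_coords h3' X
            obtain ⟨rfl, rfl, rfl, rfl⟩ := tri_disj h h1 h2 h3 h4 h5 h6 h1' h2' h3' h4' h5' h6'
              i1 i2 j1 j2 (m1.symm.trans n1) (m2.symm.trans n2)
            rfl
          · intro z _
            exact coordMap_meas z triOpen_meas
      _ ≤ volume P := by
          refine measure_mono fun X hX => ?_
          simp only [Set.mem_iUnion] at hX
          obtain ⟨⟨⟨a, b⟩, ⟨x, y⟩⟩, hz, ⟨i1, i2, i3⟩⟩ := hX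
          obtain ⟨h1, h2, h3, -⟩ := mem_succPairs.1 hz
          obtain ⟨m1, m2⟩ := pair_coords h3 X
          rw [hpol]
          intro p q hpq
          have k1 : (-1 : ℝ) ≤ p * a + q * b := by exact_mod_cast h.le h1 hpq
          have k2 : (-1 : ℝ) ≤ p * x + q * y := by exact_mod_cast h.le h2 hpq
          have l1 := mul_nonneg i1.le (by linarith : (0 : ℝ) ≤ p * a + q * b + 1)
          have l2 := mul_nonneg i2.le (by linarith : (0 : ℝ) ≤ p * x + q * y + 1)
          rw [m1, m2]
          linarith
  rw [le_antisymm upper lower, ENNReal.toReal_mul, ENNReal.toReal_ofReal (by norm_num),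
    ENNReal.toReal_natCast, h.card_succPairs,
    Nat.cast_sub (Finset.card_pos.2 ⟨_, h.zero⟩)]
  push_cast
  ring

theorem halfspace_hull {S : Set (Fin 2 → ℝ)} (u : Fin 2 → ℝ)
    (h : ∀ x ∈ S, -1 ≤ u 0 * x 0 + u 1 * x 1) :
    ∀ x ∈ convexHull ℝ S, -1 ≤ u 0 * x 0 + u 1 * x 1 := by
  intro x hx
  have hc : Convex ℝ {x : Fin 2 → ℝ | -1 ≤ u 0 * x 0 + u 1 * x 1} := by
    intro a ha b hb s t hs ht hst
    have ha' : -1 ≤ u 0 * a 0 + u 1 * a 1 := ha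
    have hb' : -1 ≤ u 0 * b 0 + u 1 * b 1 := hb
    change -1 ≤ u 0 * (s * a 0 + t * b 0) + u 1 * (s * a 1 + t * b 1)
    nlinarith [mul_nonneg hs (by linarith : 0 ≤ u 0 * a 0 + u 1 * a 1 + 1),
      mul_nonneg ht (by linarith : 0 ≤ u 0 * b 0 + u 1 * b 1 + 1)]
  exact convexHull_min (fun y hy => h y hy) hc hx

/-- The part of the bipolar theorem that is needed here. -/
theorem bipolar_of_compact {P : Set (Fin 2 → ℝ)} (hcv : Convex ℝ P) (hcl : IsClosed P)
    (h0 : (0 : Fin 2 → ℝ) ∈ P) (x : Fin 2 → ℝ)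
    (hx : ∀ u : Fin 2 → ℝ, (∀ y ∈ P, -1 ≤ u 0 * y 0 + u 1 * y 1) →
      -1 ≤ u 0 * x 0 + u 1 * x 1) : x ∈ P := by
  by_contra hxP
  obtain ⟨f, s, hf, hs⟩ := geometric_hahn_banach_closed_point hcv hcl hxP
  have hspos : 0 < s := by simpa using hf 0 h0
  have hfy : ∀ y : Fin 2 → ℝ, f y = y 0 * f (Pi.single 0 1) + y 1 * f (Pi.single 1 1) := by
    intro y
    have hy : y = y 0 • (Pi.single 0 1 : Fin 2 → ℝ) + y 1 • (Pi.single 1 1 : Fin 2 → ℝ) := by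
      ext i
      fin_cases i <;> simp
    conv_lhs => rw [hy]
    simp only [map_add, map_smul, smul_eq_mul]
  have key : ∀ y : Fin 2 → ℝ, -(f (Pi.single 0 1)) / s * y 0 + -(f (Pi.single 1 1)) / s * y 1
      = -(f y / s) := by
    intro y
    rw [hfy y]
    ring
  have h1 := hx ![-(f (Pi.single 0 1)) / s, -(f (Pi.single 1 1)) / s] (by
    intro y hy
    simp only [Matrix.cons_val_zero, Matrix.cons_val_one]
    rw [key]
    have : f y / s ≤ 1 := by
      rw [div_le_one hspos]
      exact (hf y hy).le
    linarith)
  simp only [Matrix.cons_val_zero, Matrix.cons_val_one] at h1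
  rw [key] at h1
  have : 1 < f x / s := by
    rw [one_lt_div hspos]
    exact hs
  linarith

theorem coeLat_eq_embZ (v : Fin 2 → ℤ) : coeLat v = embZ (v 0, v 1) := by
  ext i
  fin_cases i <;> simp [coeLat, embZ]

theorem lattice_finite {P : Set (Fin 2 → ℝ)} (hb : Bornology.IsBounded P) :
    {n : ℤ × ℤ | embZ n ∈ P}.Finite := by
  obtain ⟨R, hR⟩ := hb.exists_norm_le
  have hsub : {n : ℤ × ℤ | embZ n ∈ P} ⊆
      Set.Icc (-⌈R⌉) ⌈R⌉ ×ˢ Set.Icc (-⌈R⌉) ⌈R⌉ := by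
    rintro ⟨a, b⟩ hn
    have h1 := hR _ hn
    have h2 := (norm_le_pi_norm (embZ (a, b)) 0).trans h1
    have h3 := (norm_le_pi_norm (embZ (a, b)) 1).trans h1
    simp only [embZ, Matrix.cons_val_zero, Matrix.cons_val_one, Real.norm_eq_abs] at h2 h3
    have h4 := abs_le.mp (h2.trans (Int.le_ceil R))
    have h5 := abs_le.mp (h3.trans (Int.le_ceil R))
    refine ⟨⟨?_, ?_⟩, ⟨?_, ?_⟩⟩
    · exact_mod_cast h4.1
    · exact_mod_cast h4.2
    · exact_mod_cast h5.1
    · exact_mod_cast h5.2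
  exact ((Set.finite_Icc _ _).prod (Set.finite_Icc _ _)).subset hsub

theorem hull_lattice {P : Set (Fin 2 → ℝ)} (hP : IsLatticePolytope P) {B : Finset (ℤ × ℤ)}
    (hB : ∀ n, n ∈ B ↔ embZ n ∈ P) : P = convexHull ℝ (embZ '' (B : Set (ℤ × ℤ))) := by
  obtain ⟨V, hV⟩ := hP
  apply Set.Subset.antisymm
  · rw [hV]
    apply convexHull_mono
    rintro _ ⟨v, hv, rfl⟩
    refine ⟨(v 0, v 1), ?_, (coeLat_eq_embZ v).symm⟩
    rw [Finset.mem_coe, hB, ← coeLat_eq_embZ, hV]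
    exact subset_convexHull ℝ _ ⟨v, hv, rfl⟩
  · apply convexHull_min
    · rintro _ ⟨n, hn, rfl⟩
      exact (hB n).mp hn
    · rw [hV]
      exact convex_convexHull ℝ _

theorem lattice_compact {P : Set (Fin 2 → ℝ)} (hP : IsLatticePolytope P) : IsCompact P := by
  obtain ⟨V, hV⟩ := hP
  rw [hV]
  exact Set.Finite.isCompact_convexHull (𝕜 := ℝ) (V.finite_toSet.image _)

theorem mem_iff_lattice {P Q : Set (Fin 2 → ℝ)} {C : Finset (ℤ × ℤ)}
    (hQ : Q = convexHull ℝ (embZ '' (C : Set (ℤ × ℤ))))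
    (hPQ : ∀ x, x ∈ P ↔ ∀ u ∈ Q, -1 ≤ u 0 * x 0 + u 1 * x 1) (x : Fin 2 → ℝ) :
    x ∈ P ↔ ∀ p q : ℤ, (p, q) ∈ C → (-1 : ℝ) ≤ p * x 0 + q * x 1 := by
  rw [hPQ]
  constructor
  · intro h p q hpq
    have := h (embZ (p, q)) (by
      rw [hQ]
      exact subset_convexHull ℝ _ ⟨_, hpq, rfl⟩)
    simpa [embZ] using this
  · intro h u hu
    rw [hQ] at hu
    have := halfspace_hull (S := embZ '' (C : Set (ℤ × ℤ))) x (by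
      rintro _ ⟨⟨p, q⟩, hpq, rfl⟩
      have := h p q hpq
      simp only [embZ, Matrix.cons_val_zero, Matrix.cons_val_one]
      linarith) u hu
    linarith

theorem reflexive_polygon_twelve (Δ : Set (Fin 2 → ℝ))
    (hΔ : IsReflexive Δ) (hdim : dimSet Δ = 2) :
    v2 Δ + v2 (polarDual Δ) = 12 := by
  obtain ⟨hP, h0, hQ⟩ := hΔ
  have hPc := lattice_compact hP
  have hQc := lattice_compact hQ
  have hB : ∀ n, n ∈ (lattice_finite hPc.isBounded).toFinset ↔ embZ n ∈ Δ := by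
    intro n
    simp
  have hC : ∀ n, n ∈ (lattice_finite hQc.isBounded).toFinset ↔ embZ n ∈ polarDual Δ := by
    intro n
    simp
  generalize (lattice_finite hPc.isBounded).toFinset = B at hB
  generalize (lattice_finite hQc.isBounded).toFinset = C at hC
  have hPh := hull_lattice hP hB
  have hQh := hull_lattice hQ hC
  have hQP : ∀ u, u ∈ polarDual Δ ↔ ∀ x ∈ Δ, -1 ≤ x 0 * u 0 + x 1 * u 1 := by
    intro u
    simp only [polarDual, Set.mem_ofPred_eq, Fin.sum_univ_two, mul_comm]
  have hPQ : ∀ x, x ∈ Δ ↔ ∀ u ∈ polarDual Δ, -1 ≤ u 0 * x 0 + u 1 * x 1 := by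
    intro x
    constructor
    · intro hx u hu
      have := (hQP u).mp hu x hx
      linarith
    · intro h
      refine bipolar_of_compact ?_ hPc.isClosed (interior_subset h0) x ?_
      · rw [hPh]
        exact convex_convexHull ℝ _
      · intro u hu
        refine h u ((hQP u).mpr ?_)
        intro y hy
        have := hu y hy
        linarith
  have hpolP := mem_iff_lattice hQh hPQ
  have hpolQ := mem_iff_lattice hPh hQP
  have hRP : RP B C := by
    refine ⟨?_, ?_⟩
    · intro x y
      rw [hB, hpolP]
      simp only [embZ, Matrix.cons_val_zero, Matrix.cons_val_one]
      exact forall_congr' fun p => forall_congr' fun q => imp_congr_right fun _ => by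
        exact_mod_cast Iff.rfl
    · intro p q
      rw [hC, hpolQ]
      simp only [embZ, Matrix.cons_val_zero, Matrix.cons_val_one]
      refine forall_congr' fun x => forall_congr' fun y => imp_congr_right fun _ => ?_
      rw [mul_comm p x, mul_comm q y]
      exact_mod_cast Iff.rfl
  have e1 := hRP.pick hPc.isBounded hPh hpolP
  have e2 := hRP.symm.pick hQc.isBounded hQh hpolQ
  have e3 := hRP.card_eq
  have e4 : (B.card : ℝ) + C.card = 14 := by exact_mod_cast e3
  unfold v2
  linarith

end
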